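/- arXiv:2107.10298 — 2 statements merged into one kernel-verified Lean document; each statement's English description precedes it below -/
import Mathlib

section
/- The critical determinant of the open unit cube C = (-1,1)^3 in R^3 equals 1, and every C-admissible lattice of covolume 1 contains one of the standard basis vectors e1, e2, e3 (Hajós–Minkowski theorem in dimension 3). -/
def latticeOf {n : ℕ} (M : Matrix (Fin n) (Fin n) ℝ) : Set (Fin n → ℝ) :=
  {x | ∃ k : Fin n → ℤ, x = M.mulVec fun i => (k i : ℝ)}

noncomputable def critDet {n : ℕ} (D : Set (Fin n → ℝ)) : ℝ :=
  sInf {d | ∃ M : Matrix (Fin n) (Fin n) ℝ, M.det ≠ 0 ∧ latticeOf M ∩ D = {0} ∧ d = |M.det|}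

/-!
If a lattice of covolume one is admissible for the cube, then the lattice translates of the
half-open unit cube `Q` tile space. Hence `∫ x in Q, exp (2πi ξ·x) = 0` for every nonzero dual
vector `ξ`, and as this integral is a product of one-dimensional ones, `ξ` has a nonzero integer
coordinate. In particular the dual lattice is again admissible of covolume one, and by duality every
nonzero vector of the lattice itself has a nonzero integer coordinate (Keller).

In dimension three, Minkowski's convex body theorem gives for each `i` a lattice vector `u i` in the
relative interior of a facet `x i = ± 1` of the cube. Keller's property for `u i ± u j` shows that
`u i j = 0` or `u j i = 0`. If none of the `u i` is a multiple of a basis vector, the nonzero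
off-diagonal entries therefore form a 3-cycle, and then no coordinate of `u 0 + u 1 + u 2` is an
integer.
-/

open MeasureTheory Function
open scoped Pointwise ENNReal FourierTransform

section FundamentalDomain

lemma isAddFundamentalDomain_of_pairwise_aedisjoint {G α : Type*} [AddGroup G] [Countable G]
    [AddAction G α] [MeasurableSpace α] [MeasurableConstVAdd G α] {μ : Measure α}
    [VAddInvariantMeasure G α μ] {s t : Set α} (hs : IsAddFundamentalDomain G s μ)
    (ht : NullMeasurableSet t μ) (hdisj : Pairwise (AEDisjoint μ on fun g : G ↦ g +ᵥ t))
    (hst : μ s ≤ μ t) (hfin : μ s ≠ ∞) : IsAddFundamentalDomain G t μ := by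
  have htg (g : G) : NullMeasurableSet (g +ᵥ t) μ := ht.vadd g
  set U : Set α := ⋃ g : G, g +ᵥ t with hU
  have hUs : μ (U ∩ s) = μ t := by
    rw [hs.measure_eq_tsum t, hU, Set.iUnion_inter, measure_iUnion₀]
    · exact hdisj.mono fun g h hgh ↦ hgh.mono Set.inter_subset_left Set.inter_subset_left
    · exact fun g ↦ (htg g).inter hs.nullMeasurableSet
  have hae : (U ∩ s : Set α) =ᵐ[μ] s :=
    ae_eq_of_subset_of_measure_ge Set.inter_subset_right (hst.trans_eq hUs.symm)
      ((NullMeasurableSet.iUnion htg).inter hs.nullMeasurableSet) hfin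
  have hUc_inter : μ (Uᶜ ∩ s) = 0 := by
    have h := ae_le_set.1 hae.symm.le
    rwa [Set.sdiff_inter_self_eq_sdiff, Set.sdiff_eq, Set.inter_comm] at h
  have hUc : μ Uᶜ = 0 := by
    refine hs.measure_zero_of_invariant _ (fun g ↦ ?_) hUc_inter
    rw [Set.vadd_set_compl, hU, Set.vadd_set_iUnion]
    simp_rw [vadd_vadd]
    rw [(add_left_surjective g).iUnion_comp fun h : G ↦ h +ᵥ t]
  refine ⟨ht, ?_, hdisj⟩
  rwa [hU, Set.iUnion_vadd_eq_ofPred_exists] at hUc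

lemma setIntegral_addChar_eq_zero {E : Type*} [AddCommGroup E] [MeasurableSpace E]
    [MeasurableAdd E] {μ : Measure E} [μ.IsAddLeftInvariant] {L : AddSubgroup E} [Countable L]
    {Q : Set E} (hQ : IsAddFundamentalDomain L Q μ) {ψ : AddChar E ℂ} (hψ : ψ ≠ 1)
    (hL : ∀ x ∈ L, ψ x = 1) : ∫ x in Q, ψ x ∂μ = 0 := by
  obtain ⟨a, ha⟩ := AddChar.ne_one_iff.1 hψ
  have hperiodic (g : L) (x : E) : ψ (g +ᵥ x) = ψ x := by
    rw [AddSubgroup.vadd_def, vadd_eq_add, AddChar.map_add_eq_mul, hL g g.2, one_mul]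
  have htranslate : ψ a * ∫ x in Q, ψ x ∂μ = ∫ x in Q, ψ x ∂μ := calc
    ψ a * ∫ x in Q, ψ x ∂μ = ∫ x in Q, ψ (a +ᵥ x) ∂μ := by
      simp only [vadd_eq_add, AddChar.map_add_eq_mul, integral_const_mul]
    _ = ∫ x in a +ᵥ Q, ψ x ∂μ :=
      ((measurePreserving_vadd a μ).setIntegral_image_emb
        (measurableEmbedding_const_vadd a) _ _).symm
    _ = ∫ x in Q, ψ x ∂μ := (hQ.vadd_of_comm a).setIntegral_eq hQ hperiodic
  exact (mul_left_eq_self₀.1 htranslate).resolve_left ha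

end FundamentalDomain

section DotCharacter

lemma exists_int_of_integral_fourierChar_eq_zero {t : ℝ}
    (h : ∫ x in Set.Ioc (0 : ℝ) 1, (𝐞 (t * x) : ℂ) = 0) : ∃ m : ℤ, m ≠ 0 ∧ t = m := by
  have ht : t ≠ 0 := by
    rintro rfl
    simp at h
  have hc : (2 * Real.pi * t * Complex.I : ℂ) ≠ 0 := by simp [ht, Real.pi_ne_zero]
  have hexp (x : ℝ) : (𝐞 (t * x) : ℂ) = Complex.exp (2 * Real.pi * t * Complex.I * x) := by
    rw [Real.fourierChar_apply]
    push_cast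
    ring_nf
  simp only [hexp, ← intervalIntegral.integral_of_le zero_le_one] at h
  rw [integral_exp_mul_complex hc, div_eq_zero_iff, or_iff_left hc, sub_eq_zero,
    Complex.ofReal_zero, mul_zero, Complex.exp_zero, Complex.ofReal_one, mul_one,
    Complex.exp_eq_one_iff] at h
  obtain ⟨m, hm⟩ := h
  have htm : t = m := by
    have : (t : ℂ) = m := by
      apply mul_left_cancel₀ Complex.two_pi_I_ne_zero
      linear_combination hm
    exact_mod_cast this
  exact ⟨m, by rintro rfl; simp [ht] at htm, htm⟩

variable {ι : Type*} [Fintype ι]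

/-- The character `x ↦ exp (2πi ξ·x)` of the additive group `ι → ℝ` with frequency `ξ`.
It is periodic under a lattice when `ξ` is a dual vector. -/
noncomputable def dotChar (ξ : ι → ℝ) : AddChar (ι → ℝ) ℂ :=
  Circle.coeHom.compAddChar
    (Real.fourierChar.compAddMonoidHom (AddMonoidHom.mk' (ξ ⬝ᵥ ·) (dotProduct_add ξ)))

lemma dotChar_apply (ξ x : ι → ℝ) : dotChar ξ x = (𝐞 (ξ ⬝ᵥ x) : ℂ) := rfl

lemma dotChar_eq_prod (ξ x : ι → ℝ) : dotChar ξ x = ∏ i, (𝐞 (ξ i * x i) : ℂ) := by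
  simp only [dotChar_apply, Real.fourierChar_apply, dotProduct, Finset.mul_sum, Complex.ofReal_sum,
    Finset.sum_mul, Complex.exp_sum]

lemma dotChar_eq_one_of_int {ξ x : ι → ℝ} {m : ℤ} (h : ξ ⬝ᵥ x = m) : dotChar ξ x = 1 := by
  rw [dotChar_apply, h, Real.fourierChar_apply, Complex.exp_eq_one_iff]
  exact ⟨m, by push_cast; ring⟩

lemma dotChar_ne_one {ξ : ι → ℝ} (hξ : ξ ≠ 0) : dotChar ξ ≠ 1 := by
  obtain ⟨t, ht⟩ := AddChar.ne_one_iff.1 Real.fourierChar_ne_one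
  have hξξ : ξ ⬝ᵥ ξ ≠ 0 := by rwa [Ne, dotProduct_self_eq_zero]
  refine AddChar.ne_one_iff.2 ⟨(t / (ξ ⬝ᵥ ξ)) • ξ, ?_⟩
  rwa [dotChar_apply, dotProduct_smul, smul_eq_mul, div_mul_cancel₀ _ hξξ, Ne, Circle.coe_eq_one]

lemma setIntegral_unitCube_dotChar (ξ : ι → ℝ) :
    ∫ x in Set.univ.pi fun _ : ι ↦ Set.Ioc (0 : ℝ) 1, dotChar ξ x =
      ∏ i, ∫ x in Set.Ioc (0 : ℝ) 1, (𝐞 (ξ i * x) : ℂ) := by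
  simp only [dotChar_eq_prod]
  rw [volume_pi, Measure.restrict_pi_pi]
  exact integral_fintype_prod_eq_prod (𝕜 := ℂ) fun i (x : ℝ) ↦ (𝐞 (ξ i * x) : ℂ)

end DotCharacter

section Admissible

variable {ι : Type*} {L : AddSubgroup (ι → ℝ)}

/-- `L` is admissible for the open cube `(-1, 1) ^ ι`: it meets the cube only in the origin.
Neither discreteness nor full rank of `L` is part of the notion. -/
def CubeAdmissible (L : AddSubgroup (ι → ℝ)) : Prop :=
  ∀ x ∈ L, (∀ i, |x i| < 1) → x = 0

/-- The property which Keller's theorem establishes for lattice tilings by unit cubes: every nonzero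
vector of `L` has a nonzero integer coordinate. -/
def KellerProperty (L : AddSubgroup (ι → ℝ)) : Prop :=
  ∀ x ∈ L, x ≠ 0 → ∃ i, ∃ m : ℤ, m ≠ 0 ∧ x i = m

lemma int_eq_zero_of_abs_lt_one {m : ℤ} (h : |(m : ℝ)| < 1) : m = 0 :=
  Int.abs_lt_one_iff.1 (by exact_mod_cast h)

lemma KellerProperty.cubeAdmissible (hL : KellerProperty L) : CubeAdmissible L := by
  intro x hx hlt
  by_contra hx0
  obtain ⟨i, m, hm, hxi⟩ := hL x hx hx0
  exact hm (int_eq_zero_of_abs_lt_one (hxi ▸ hlt i))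

lemma CubeAdmissible.pairwise_disjoint_vadd_unitCube (hL : CubeAdmissible L) :
    Pairwise (Disjoint on fun g : L ↦ g +ᵥ Set.univ.pi fun _ : ι ↦ Set.Ioc (0 : ℝ) 1) := by
  intro g h hgh
  refine Set.disjoint_left.2 ?_
  rintro x ⟨y, hy, rfl⟩ ⟨z, hz, hzy⟩
  refine hgh (Subtype.ext (sub_eq_zero.1 (hL _ (L.sub_mem g.2 h.2) fun i ↦ ?_)))
  have hi : (h : ι → ℝ) i + z i = (g : ι → ℝ) i + y i := congrFun hzy i
  have hyi := hy i trivial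
  have hzi := hz i trivial
  rw [Pi.sub_apply, abs_lt]
  constructor <;> linarith [hyi.1, hyi.2, hzi.1, hzi.2]

variable [Fintype ι] [Countable L] {F : Set (ι → ℝ)}

lemma CubeAdmissible.isAddFundamentalDomain_unitCube (hL : CubeAdmissible L)
    (hF : IsAddFundamentalDomain L F volume) (hvol : volume F = 1) :
    IsAddFundamentalDomain L (Set.univ.pi fun _ : ι ↦ Set.Ioc (0 : ℝ) 1) volume :=
  isAddFundamentalDomain_of_pairwise_aedisjoint hF
    (MeasurableSet.univ_pi fun _ ↦ measurableSet_Ioc).nullMeasurableSet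
    (hL.pairwise_disjoint_vadd_unitCube.mono fun _ _ h ↦ h.aedisjoint)
    (by simp [hvol, Real.volume_pi_Ioc]) (by simp [hvol])

lemma CubeAdmissible.exists_int_coord_of_dual (hL : CubeAdmissible L)
    (hF : IsAddFundamentalDomain L F volume) (hvol : volume F = 1) {ξ : ι → ℝ} (hξ : ξ ≠ 0)
    (hdual : ∀ x ∈ L, ∃ m : ℤ, ξ ⬝ᵥ x = m) : ∃ i, ∃ m : ℤ, m ≠ 0 ∧ ξ i = m := by
  have hint := setIntegral_addChar_eq_zero (hL.isAddFundamentalDomain_unitCube hF hvol)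
    (dotChar_ne_one hξ) fun x hx ↦ (hdual x hx).elim fun _ ↦ dotChar_eq_one_of_int
  rw [setIntegral_unitCube_dotChar, Finset.prod_eq_zero_iff] at hint
  obtain ⟨i, -, hi⟩ := hint
  exact ⟨i, exists_int_of_integral_fourierChar_eq_zero hi⟩

end Admissible

section FacetVector

variable {ι : Type*} {i : ι} {x : ι → ℝ}

/-- `x` lies in the relative interior of one of the two facets `x i = ± 1` of the cube
`[-1, 1] ^ ι`; Minkowski's theorem provides a lattice vector of this kind for each `i`. -/
def IsFacetVector (i : ι) (x : ι → ℝ) : Prop :=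
  |x i| = 1 ∧ ∀ j ≠ i, |x j| < 1

lemma IsFacetVector.neg (hx : IsFacetVector i x) : IsFacetVector i (-x) := by
  simpa [IsFacetVector] using hx

lemma IsFacetVector.single_mem [DecidableEq ι] {L : AddSubgroup (ι → ℝ)}
    (hx : IsFacetVector i x) (hmem : x ∈ L) (hoff : ∀ j ≠ i, x j = 0) : Pi.single i 1 ∈ L := by
  have hxi : x = Pi.single i (x i) := by
    ext j
    obtain rfl | hj := eq_or_ne j i <;> simp [*]
  rw [hxi] at hmem
  obtain h | h := eq_or_eq_neg_of_abs_eq hx.1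
  · rwa [h] at hmem
  · rwa [h, Pi.single_neg, neg_mem_iff] at hmem

end FacetVector

section Minkowski

variable {ι : Type*} [Fintype ι] {L : AddSubgroup (ι → ℝ)} [Countable L] {F : Set (ι → ℝ)}

lemma exists_ne_zero_mem_forall_abs_lt (hF : IsAddFundamentalDomain L F volume) {c : ι → ℝ}
    (hc : volume F < ∏ i, ENNReal.ofReal (c i)) : ∃ x ∈ L, x ≠ 0 ∧ ∀ i, |x i| < c i := by
  have hvol : volume (Set.univ.pi fun i ↦ Set.Ioo (-c i) (c i)) =
      (∏ i, ENNReal.ofReal (c i)) * 2 ^ Module.finrank ℝ (ι → ℝ) := by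
    have hside (i : ι) : ENNReal.ofReal (c i - -c i) = ENNReal.ofReal (c i) * 2 := by
      rw [sub_neg_eq_add, ← mul_two, ENNReal.ofReal_mul' zero_le_two, ENNReal.ofReal_ofNat]
    rw [Real.volume_pi_Ioo, Finset.prod_congr rfl fun i _ ↦ hside i, Finset.prod_mul_distrib]
    simp
  obtain ⟨x, hx0, hx⟩ := exists_ne_zero_mem_lattice_of_measure_mul_two_pow_lt_measure
    (s := Set.univ.pi fun i ↦ Set.Ioo (-c i) (c i)) hF
    (fun x hx i hi ↦ ⟨neg_lt_neg (hx i hi).2, neg_lt.1 (hx i hi).1⟩)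
    (convex_pi fun i _ ↦ convex_Ioo _ _)
    (by rw [hvol]; gcongr; simp)
  exact ⟨x, x.2, by simpa using hx0, fun i ↦ abs_lt.2 (hx i trivial)⟩

lemma KellerProperty.exists_isFacetVector (hL : KellerProperty L)
    (hF : IsAddFundamentalDomain L F volume) (hvol : volume F = 1) (i : ι) :
    ∃ x ∈ L, IsFacetVector i x := by
  classical
  obtain ⟨x, hxL, hx0, hlt⟩ := exists_ne_zero_mem_forall_abs_lt hF (c := update 1 i 2) (by
    rw [hvol, Finset.prod_eq_single i (fun j _ hj ↦ by simp [hj]) (by simp)]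
    simp)
  have hoff (j : ι) (hj : j ≠ i) : |x j| < 1 := by simpa [hj] using hlt j
  obtain ⟨k, m, hm, hxk⟩ := hL x hxL hx0
  have hki : k = i := by
    by_contra hki
    exact hm (int_eq_zero_of_abs_lt_one (hxk ▸ hoff k hki))
  subst hki
  have hm2 : |(m : ℝ)| < 2 := by simpa [hxk] using hlt k
  have hm1 : |m| = 1 := le_antisymm (Int.lt_add_one_iff.1 (by exact_mod_cast hm2))
    (Int.one_le_abs hm)
  exact ⟨x, hxL, by rw [hxk]; exact_mod_cast hm1, hoff⟩

end Minkowski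

section ColumnLattice

variable {n : ℕ} {M : Matrix (Fin n) (Fin n) ℝ}

/-- The set `latticeOf M` as an additive subgroup: the integer span of the columns of `M`.
As a subgroup it acts on the space by translation, so it can have a fundamental domain. -/
def columnLattice (M : Matrix (Fin n) (Fin n) ℝ) : AddSubgroup (Fin n → ℝ) :=
  (Submodule.span ℤ (Set.range M.col)).toAddSubgroup

lemma mem_columnLattice {x : Fin n → ℝ} : x ∈ columnLattice M ↔ x ∈ latticeOf M := by
  rw [columnLattice, Submodule.mem_toAddSubgroup, Submodule.mem_span_range_iff_exists_fun]
  refine exists_congr fun k ↦ ?_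
  rw [Matrix.mulVec_eq_sum, eq_comm]
  simp [Matrix.col, Int.cast_smul_eq_zsmul]

instance : Countable (columnLattice M) :=
  inferInstanceAs (Countable (Submodule.span ℤ (Set.range M.col)))

lemma exists_isAddFundamentalDomain_columnLattice (hM : M.det ≠ 0) :
    ∃ F : Set (Fin n → ℝ), IsAddFundamentalDomain (columnLattice M) F volume ∧
      volume F = ENNReal.ofReal |M.det| := by
  have hli : LinearIndependent ℝ M.col :=
    Matrix.linearIndependent_cols_iff_isUnit.2 ((Matrix.isUnit_iff_isUnit_det M).2 hM.isUnit)
  let b := Module.Basis.mk hli (hli.span_eq_top_of_card_eq_finrank' (by simp)).ge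
  have hb : ⇑b = M.col := Module.Basis.coe_mk _ _
  refine ⟨ZSpan.fundamentalDomain b, ?_, ?_⟩
  · rw [columnLattice, ← hb]
    exact ZSpan.isAddFundamentalDomain' b _
  · rw [ZSpan.volume_fundamentalDomain, hb, ← Matrix.det_transpose]
    rfl

lemma latticeOf_inter_openCube_eq_singleton_iff :
    latticeOf M ∩ {x : Fin n → ℝ | ∀ i, |x i| < 1} = {0} ↔ CubeAdmissible (columnLattice M) := by
  have hzero : (0 : Fin n → ℝ) ∈ latticeOf M ∩ {x : Fin n → ℝ | ∀ i, |x i| < 1} :=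
    ⟨mem_columnLattice.1 (zero_mem _), by simp⟩
  simp [Set.eq_singleton_iff_unique_mem, hzero, CubeAdmissible, mem_columnLattice]

lemma exists_isAddFundamentalDomain_columnLattice_of_abs_det_eq_one (hM : |M.det| = 1) :
    ∃ F : Set (Fin n → ℝ), IsAddFundamentalDomain (columnLattice M) F volume ∧ volume F = 1 := by
  have hM0 : M.det ≠ 0 := abs_ne_zero.1 (hM ▸ one_ne_zero)
  simpa [hM] using exists_isAddFundamentalDomain_columnLattice hM0

lemma exists_int_dotProduct_of_mem_dual (hM : IsUnit M.det) {x y : Fin n → ℝ}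
    (hx : x ∈ columnLattice M) (hy : y ∈ columnLattice M⁻¹.transpose) :
    ∃ m : ℤ, x ⬝ᵥ y = m := by
  obtain ⟨k, rfl⟩ := mem_columnLattice.1 hx
  obtain ⟨l, rfl⟩ := mem_columnLattice.1 hy
  refine ⟨k ⬝ᵥ l, ?_⟩
  rw [Matrix.mulVec_transpose, dotProduct_comm, ← Matrix.dotProduct_mulVec,
    Matrix.mulVec_mulVec, Matrix.nonsing_inv_mul _ hM, Matrix.one_mulVec]
  simp [dotProduct, mul_comm]

lemma CubeAdmissible.kellerProperty_columnLattice_inv_transpose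
    (hL : CubeAdmissible (columnLattice M)) (hM : |M.det| = 1) :
    KellerProperty (columnLattice M⁻¹.transpose) := by
  obtain ⟨F, hF, hvol⟩ := exists_isAddFundamentalDomain_columnLattice_of_abs_det_eq_one hM
  have hMu : IsUnit M.det := (abs_ne_zero.1 (hM ▸ one_ne_zero)).isUnit
  refine fun y hy hy0 ↦ hL.exists_int_coord_of_dual hF hvol hy0 fun x hx ↦ ?_
  rw [dotProduct_comm]
  exact exists_int_dotProduct_of_mem_dual hMu hx hy

theorem CubeAdmissible.kellerProperty_columnLattice
    (hL : CubeAdmissible (columnLattice M)) (hM : |M.det| = 1) :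
    KellerProperty (columnLattice M) := by
  have hdet : |(M⁻¹.transpose).det| = 1 := by
    rw [Matrix.det_transpose, Matrix.det_nonsing_inv, Ring.inverse_eq_inv', abs_inv, hM, inv_one]
  have hinv : (M⁻¹.transpose)⁻¹.transpose = M := by
    rw [← Matrix.transpose_nonsing_inv, Matrix.transpose_transpose,
      Matrix.nonsing_inv_nonsing_inv _ (abs_ne_zero.1 (hM ▸ one_ne_zero)).isUnit]
  simpa only [hinv] using (hL.kellerProperty_columnLattice_inv_transpose
    hM).cubeAdmissible.kellerProperty_columnLattice_inv_transpose hdet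

theorem critDet_openCube (n : ℕ) : critDet {x : Fin n → ℝ | ∀ i, |x i| < 1} = 1 := by
  refine IsLeast.csInf_eq ⟨⟨1, by simp, ?_, by simp⟩, ?_⟩
  · refine latticeOf_inter_openCube_eq_singleton_iff.2 fun x hx hlt ↦ ?_
    obtain ⟨k, rfl⟩ := mem_columnLattice.1 hx
    rw [Matrix.one_mulVec] at hlt ⊢
    ext i
    simp [int_eq_zero_of_abs_lt_one (hlt i)]
  · rintro _ ⟨M, hM, hadm, rfl⟩
    by_contra! hlt
    obtain ⟨F, hF, hvol⟩ := exists_isAddFundamentalDomain_columnLattice hM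
    obtain ⟨x, hx, hx0, hx1⟩ := exists_ne_zero_mem_forall_abs_lt hF (c := 1) (by
      simpa [hvol] using hlt)
    exact hx0 (latticeOf_inter_openCube_eq_singleton_iff.1 hadm x hx hx1)

end ColumnLattice

section DimensionThree

variable {L : AddSubgroup (Fin 3 → ℝ)}

lemma add_ne_intCast {a t : ℝ} (ha : |a| = 1) (ht : |t| < 1) (ht0 : t ≠ 0) (m : ℤ) :
    a + t ≠ m := by
  intro h
  obtain ⟨k, rfl⟩ : ∃ k : ℤ, a = k := by
    obtain rfl | rfl := eq_or_eq_neg_of_abs_eq ha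
    exacts [⟨1, by simp⟩, ⟨-1, by simp⟩]
  have htm : t = (m - k : ℤ) := by
    push_cast
    linarith
  rw [htm] at ht ht0
  exact ht0 (by rw [int_eq_zero_of_abs_lt_one ht, Int.cast_zero])

lemma KellerProperty.one_le_abs_add (hL : KellerProperty L) {i j k : Fin 3} (hij : i ≠ j)
    (hki : k ≠ i) (hkj : k ≠ j) {u v : Fin 3 → ℝ} (hu : u ∈ L) (hv : v ∈ L)
    (hui : IsFacetVector i u) (hvj : IsFacetVector j v) (hvi0 : v i ≠ 0) (huj0 : u j ≠ 0) :
    1 ≤ |u k + v k| := by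
  have hi : ∀ m : ℤ, (u + v) i ≠ m := add_ne_intCast hui.1 (hvj.2 i hij) hvi0
  have hj (m : ℤ) : (u + v) j ≠ m := by
    rw [Pi.add_apply, add_comm]
    exact add_ne_intCast hvj.1 (hui.2 j hij.symm) huj0 m
  obtain ⟨l, m, hm, hl⟩ := hL (u + v) (L.add_mem hu hv) fun h ↦ hi 0 (by rw [h]; simp)
  obtain rfl : l = k := by
    have hli : l ≠ i := by rintro rfl; exact hi m hl
    have hlj : l ≠ j := by rintro rfl; exact hj m hl
    omega
  rw [← Pi.add_apply, hl]
  exact_mod_cast Int.one_le_abs hm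

lemma KellerProperty.eq_zero_or_eq_zero (hL : KellerProperty L) {i j : Fin 3} (hij : i ≠ j)
    {u v : Fin 3 → ℝ} (hu : u ∈ L) (hv : v ∈ L) (hui : IsFacetVector i u)
    (hvj : IsFacetVector j v) : v i = 0 ∨ u j = 0 := by
  by_contra! h
  obtain ⟨hvi0, huj0⟩ := h
  obtain ⟨k, hki, hkj⟩ : ∃ k, k ≠ i ∧ k ≠ j := Fin.exists_ne_and_ne_of_two_lt i j (by simp)
  have hadd : 1 ≤ |u k + v k| :=
    hL.one_le_abs_add hij hki hkj hu hv hui hvj hvi0 huj0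
  have hsub : 1 ≤ |u k + -v k| :=
    hL.one_le_abs_add hij hki hkj hu (L.neg_mem hv) hui hvj.neg (neg_ne_zero.2 hvi0) huj0
  have huk := abs_lt.1 (hui.2 k hki)
  have hvk := abs_lt.1 (hvj.2 k hkj)
  rcases le_abs.1 hadd with h₁ | h₁ <;> rcases le_abs.1 hsub with h₂ | h₂ <;> linarith

lemma existsUnique_rel_of_asymm {r : Fin 3 → Fin 3 → Prop} (hasymm : ∀ i j, r i j → ¬ r j i)
    (hsucc : ∀ i, ∃ j, r i j) (j : Fin 3) : ∃! i, r i j := by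
  choose f hf using hsucc
  have hne {i k : Fin 3} (h : r i k) : i ≠ k := by
    rintro rfl
    exact hasymm i i h h
  have hf_ne {i k : Fin 3} (h : r i k) : f k ≠ i := by
    rintro rfl
    exact hasymm _ _ h (hf k)
  have h₁ : j ≠ f j := hne (hf j)
  have h₂ : f j ≠ f (f j) := hne (hf (f j))
  have h₃ : f (f j) ≠ j := hf_ne (hf j)
  have hcycle : f (f (f j)) = j := by
    have h₄ : f (f j) ≠ f (f (f j)) := hne (hf (f (f j)))
    have h₅ : f (f (f j)) ≠ f j := hf_ne (hf (f j))
    omega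
  refine ⟨f (f j), by simpa only [hcycle] using hf (f (f j)), fun i hi ↦ ?_⟩
  have h₄ : i ≠ j := hne hi
  have h₅ : f j ≠ i := hf_ne hi
  omega

lemma KellerProperty.exists_forall_ne_eq_zero (hL : KellerProperty L) {u : Fin 3 → Fin 3 → ℝ}
    (hu : ∀ i, u i ∈ L) (hface : ∀ i, IsFacetVector i (u i)) : ∃ i, ∀ j ≠ i, u i j = 0 := by
  by_contra! hne
  have hcycle := existsUnique_rel_of_asymm (r := fun i j ↦ j ≠ i ∧ u i j ≠ 0)
    (fun i j hij hji ↦ (hL.eq_zero_or_eq_zero hji.1 (hu i) (hu j) (hface i) (hface j)).elim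
      hji.2 hij.2) hne
  have hsum (j : Fin 3) (m : ℤ) : (∑ i, u i) j ≠ m := by
    obtain ⟨i, ⟨hji, hij0⟩, hunique⟩ := hcycle j
    have hzero (k : Fin 3) (hk : k ≠ j ∧ k ≠ i) : u k j = 0 := by
      by_contra hkj
      exact hk.2 (hunique k ⟨hk.1.symm, hkj⟩)
    rw [Finset.sum_apply, Fintype.sum_eq_add j i hji hzero]
    exact add_ne_intCast (hface j).1 ((hface i).2 j hji) hij0 m
  obtain ⟨j, m, -, hj⟩ := hL (∑ i, u i) (L.sum_mem fun i _ ↦ hu i) fun h ↦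
    hsum 0 0 (by rw [h]; simp)
  exact hsum j m hj

end DimensionThree

theorem stmt14 :
    critDet {x : Fin 3 → ℝ | ∀ i, |x i| < 1} = 1 ∧
    ∀ M : Matrix (Fin 3) (Fin 3) ℝ, |M.det| = 1 →
      latticeOf M ∩ {x : Fin 3 → ℝ | ∀ i, |x i| < 1} = {0} →
      ∃ i : Fin 3, (Pi.single i (1 : ℝ)) ∈ latticeOf M := by
  refine ⟨critDet_openCube 3, fun M hM hinter ↦ ?_⟩
  have hL : KellerProperty (columnLattice M) :=
    (latticeOf_inter_openCube_eq_singleton_iff.1 hinter).kellerProperty_columnLattice hM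
  obtain ⟨F, hF, hvol⟩ := exists_isAddFundamentalDomain_columnLattice_of_abs_det_eq_one hM
  choose u hu hface using hL.exists_isFacetVector hF hvol
  obtain ⟨i, hi⟩ := hL.exists_forall_ne_eq_zero hu hface
  exact ⟨i, mem_columnLattice.1 ((hface i).single_mem (hu i) hi)⟩
end

section
/- Let Λ = M Z^2 be a B-critical lattice of a bounded convex symmetric open set B ⊂ R^2 which is not a parallelogram. Then Λ ∩ ∂B consists of exactly six points, which can be written as ±p, ±q, ±r with p = q − r, and any two of p, q, r form a basis of Λ. -/
/-- The `ℤ`-span of two vectors in `ℝ²`. -/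
def zspan (p q : Fin 2 → ℝ) : Set (Fin 2 → ℝ) :=
  {x | ∃ a b : ℤ, x = a • p + b • q}

def IsParallelogram (B : Set (Fin 2 → ℝ)) : Prop :=
  ∃ g : Matrix (Fin 2) (Fin 2) ℝ, g.det ≠ 0 ∧
    B = g.mulVec '' {y : Fin 2 → ℝ | ∀ i, |y i| < 1}

/-!
If fewer than `n(n+1)/2` pairs of points of `Mℤⁿ` lay on the boundary of `B`, some symmetric matrix
`T ≠ 0` with nonpositive trace would satisfy one linear condition per pair, namely that `1 + tT`
moves the point along a supporting hyperplane of `B`. For small `t > 0` the lattice `(1 + tT)Mℤⁿ`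
would be admissible while `det (1 + tT) < 1`, contradicting criticality. So in the plane there are
at least three pairs.

Two independent boundary lattice points form a basis: otherwise their half-sum and half-difference
are lattice points, and admissibility forces `B` to be an `ℓ¹` ball, a parallelogram. Hence any two
boundary lattice points have determinant `0` or `±1` in the coordinates of any other two, which
leaves room for exactly three pairs, the third being the sum or difference of the first two.
-/

open Matrix Filter Topology

section SymmetricPerturbation

variable {ι : Type*} [Fintype ι]

lemma exists_isSymm_ne_zero_forall_eq_zero {K κ : Type*} [Field K] [Fintype κ]
    (φ : κ → Matrix ι ι K →ₗ[K] K) (hκ : Fintype.card κ < (Fintype.card ι + 1).choose 2) :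
    ∃ T : Matrix ι ι K, T.IsSymm ∧ T ≠ 0 ∧ ∀ k, φ k T = 0 := by
  let sym : (Sym2 ι → K) →ₗ[K] Matrix ι ι K :=
    { toFun := fun c => of fun i j => c s(i, j)
      map_add' := fun _ _ => rfl
      map_smul' := fun _ _ => rfl }
  have hdim : Module.finrank K (κ → K) < Module.finrank K (Sym2 ι → K) := by
    rwa [Module.finrank_pi, Module.finrank_pi, Sym2.card]
  obtain ⟨c, hc, hc0⟩ := (Submodule.ne_bot_iff _).1
    (LinearMap.ker_ne_bot_of_finrank_lt (f := LinearMap.pi φ ∘ₗ sym) hdim)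
  refine ⟨sym c, IsSymm.ext fun i j => congrArg c Sym2.eq_swap, fun h => hc0 ?_,
    fun k => congrFun (LinearMap.mem_ker.1 hc) k⟩
  ext z
  induction z with | _ i j => exact congrFun₂ h i j

variable [DecidableEq ι]

lemma det_one_add_smul_eq_prod_eigenvalues {T : Matrix ι ι ℝ} (hT : T.IsHermitian) (t : ℝ) :
    (1 + t • T).det = ∏ i, (1 + t * hT.eigenvalues i) := by
  have hconj : 1 + t • T = Unitary.conjStarAlgAut ℝ _ hT.eigenvectorUnitary
      (diagonal fun i => 1 + t * hT.eigenvalues i) := by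
    have hdiag : (diagonal fun i => 1 + t * hT.eigenvalues i) =
        1 + t • diagonal hT.eigenvalues := by
      ext i j
      by_cases h : i = j <;> simp [diagonal, one_apply, h]
    rw [hdiag, map_add, map_one, map_smul]
    nth_rw 1 [hT.spectral_theorem]
    rfl
  rw [hconj, Unitary.conjStarAlgAut_apply, det_mul_right_comm, ← det_diagonal]
  simp

lemma eventually_det_one_add_smul_lt_one {T : Matrix ι ι ℝ} (hT : T.IsHermitian) (hT0 : T ≠ 0)
    (htr : T.trace ≤ 0) : ∀ᶠ t in 𝓝[>] (0 : ℝ), (1 + t • T).det < 1 := by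
  have hpos : ∀ᶠ t in 𝓝[>] (0 : ℝ), ∀ i, 0 < 1 + t * hT.eigenvalues i := by
    refine eventually_all.2 fun i => nhdsWithin_le_nhds ?_
    have hcont : Continuous fun t => 1 + t * hT.eigenvalues i := by fun_prop
    exact hcont.continuousAt.eventually (lt_mem_nhds (by simp))
  filter_upwards [hpos, self_mem_nhdsWithin] with t ht ht0
  obtain ⟨j, hj⟩ := Function.ne_iff.1 (mt hT.eigenvalues_eq_zero_iff.1 hT0)
  calc (1 + t • T).det = ∏ i, (1 + t * hT.eigenvalues i) :=
        det_one_add_smul_eq_prod_eigenvalues hT t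
    _ < ∏ i, Real.exp (t * hT.eigenvalues i) := by
        refine Finset.prod_lt_prod (fun i _ => ht i) (fun i _ => ?_) ⟨j, Finset.mem_univ j, ?_⟩
        · rw [add_comm]
          exact Real.add_one_le_exp _
        · rw [add_comm]
          exact Real.add_one_lt_exp (mul_ne_zero ht0.ne' hj)
    _ = Real.exp (t * T.trace) := by
        rw [← Real.exp_sum, ← Finset.mul_sum, hT.trace_eq_sum_eigenvalues]
        rfl
    _ ≤ 1 := Real.exp_le_one_iff.2 (mul_nonpos_of_nonneg_of_nonpos ht0.le htr)

end SymmetricPerturbation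

section CriticalLattice

variable {n : ℕ} {B : Set (Fin n → ℝ)} {M : Matrix (Fin n) (Fin n) ℝ}

/-- The lattice `Mℤⁿ` as a subgroup of `ℝⁿ`. -/
def latticeSubgroup (M : Matrix (Fin n) (Fin n) ℝ) : AddSubgroup (Fin n → ℝ) where
  carrier := latticeOf M
  zero_mem' := ⟨0, by ext; simp [mulVec]⟩
  add_mem' := by
    rintro _ _ ⟨k, rfl⟩ ⟨l, rfl⟩
    exact ⟨k + l, by simp [← mulVec_add, ← Pi.add_def]⟩
  neg_mem' := by
    rintro _ ⟨k, rfl⟩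
    exact ⟨-k, by simp [← mulVec_neg, ← Pi.neg_def]⟩

/-- The lattice `Mℤⁿ` is `B`-critical: it is admissible for `B` and its covolume is the critical
determinant of `B`. -/
structure IsCritical (B : Set (Fin n → ℝ)) (M : Matrix (Fin n) (Fin n) ℝ) : Prop where
  det_ne_zero : M.det ≠ 0
  inter_eq : latticeOf M ∩ B = {0}
  abs_det_eq : |M.det| = critDet B

lemma latticeOf_mul (A M : Matrix (Fin n) (Fin n) ℝ) :
    latticeOf (A * M) = A.mulVec '' latticeOf M := by
  ext z
  simp only [latticeOf, ← mulVec_mulVec, Set.mem_image, Set.mem_ofPred_eq]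
  exact ⟨fun ⟨k, hk⟩ => ⟨_, ⟨k, rfl⟩, hk.symm⟩, fun ⟨_, ⟨k, hk⟩, hz⟩ => ⟨k, by rw [← hz, hk]⟩⟩

lemma finite_latticeOf_inter (hM : M.det ≠ 0) (hB : Bornology.IsBounded B) :
    (latticeOf M ∩ B).Finite := by
  have hinv : M⁻¹ * M = 1 := nonsing_inv_mul M hM.isUnit
  have hbdd : Bornology.IsBounded (M⁻¹.mulVec '' B) :=
    (LinearMap.toContinuousLinearMap (toLin' M⁻¹)).lipschitz.isBounded_image hB
  obtain ⟨R, hR⟩ := hbdd.subset_closedBall 0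
  have hfin : {k : Fin n → ℤ | ‖k‖ ≤ R}.Finite := by
    simpa [Metric.closedBall] using
      (isCompact_closedBall (0 : Fin n → ℤ) R).finite_of_discrete
  refine (hfin.image fun k => M *ᵥ fun i => (k i : ℝ)).subset ?_
  rintro _ ⟨⟨k, rfl⟩, hk⟩
  refine ⟨k, ?_, rfl⟩
  have hkR := mem_closedBall_zero_iff.1 (hR ⟨_, hk, rfl⟩)
  rw [mulVec_mulVec, hinv, one_mulVec] at hkR
  exact hkR

lemma eventually_norm_le_two_mul_norm_mulVec {α : Type*} {l : Filter α}
    {A : α → Matrix (Fin n) (Fin n) ℝ} (hA : Tendsto A l (𝓝 1)) :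
    ∀ᶠ t in l, ∀ z, ‖z‖ ≤ 2 * ‖A t *ᵥ z‖ := by
  let := Matrix.linftyOpNormedAddCommGroup (m := Fin n) (n := Fin n) (α := ℝ)
  have hclose : ∀ᶠ t in l, ‖A t - 1‖ < 1 / 2 := by
    have := (hA.sub_const 1).norm
    rw [sub_self, norm_zero] at this
    exact this.eventually (gt_mem_nhds (by norm_num))
  filter_upwards [hclose] with t ht z
  have hz : ‖(A t - 1) *ᵥ z‖ ≤ 1 / 2 * ‖z‖ :=
    (linfty_opNorm_mulVec _ _).trans (mul_le_mul_of_nonneg_right ht.le (norm_nonneg z))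
  have := norm_sub_norm_le z (A t *ᵥ z)
  rw [sub_mulVec, one_mulVec, norm_sub_rev] at hz
  linarith

lemma eventually_latticeOf_mul_inter_eq {α : Type*} {l : Filter α}
    {A : α → Matrix (Fin n) (Fin n) ℝ} (hbdd : Bornology.IsBounded B) (hM : M.det ≠ 0)
    (hadm : latticeOf M ∩ B = {0}) (hA : Tendsto A l (𝓝 1))
    (hpush : ∀ z ∈ latticeOf M ∩ frontier B, ∀ᶠ t in l, A t *ᵥ z ∉ B) :
    ∀ᶠ t in l, latticeOf (A t * M) ∩ B = {0} := by
  have h0 : 0 ∈ latticeOf M ∩ B := hadm ▸ rfl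
  obtain ⟨R, hR⟩ := hbdd.subset_closedBall 0
  have hnear : ∀ᶠ t in l, ∀ z ∈ latticeOf M ∩ Metric.closedBall 0 (2 * R), z ≠ 0 →
      A t *ᵥ z ∉ B := by
    refine (eventually_all_finite (finite_latticeOf_inter hM Metric.isBounded_closedBall)).2 ?_
    rintro z ⟨hz, -⟩
    by_cases hz0 : z = 0
    · simp [hz0]
    have hzB : z ∉ B := fun h => hz0 (hadm.subset ⟨hz, h⟩)
    by_cases hzc : z ∈ closure B
    · filter_upwards [hpush z ⟨hz, hzc, fun h => hzB (interior_subset h)⟩] with t ht _ using ht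
    · have hlim : Tendsto (fun t => A t *ᵥ z) l (𝓝 z) := by
        have hcont : Continuous fun C : Matrix (Fin n) (Fin n) ℝ => C *ᵥ z := by fun_prop
        simpa [Function.comp_def] using (hcont.tendsto 1).comp hA
      filter_upwards [hlim.eventually (isClosed_closure.isOpen_compl.mem_nhds hzc)] with t ht _ h
      exact ht (subset_closure h)
  filter_upwards [hnear, eventually_norm_le_two_mul_norm_mulVec hA] with t hnear hfar
  rw [latticeOf_mul]
  refine Set.Subset.antisymm ?_ (Set.singleton_subset_iff.2 ⟨⟨0, h0.1, mulVec_zero _⟩, h0.2⟩)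
  rintro _ ⟨⟨z, hz, rfl⟩, hzB⟩
  by_cases hz0 : z = 0
  · simp [hz0]
  have hzR : ‖A t *ᵥ z‖ ≤ R := mem_closedBall_zero_iff.1 (hR hzB)
  exact absurd hzB (hnear z ⟨hz, mem_closedBall_zero_iff.2 (by linarith [hfar z])⟩ hz0)

lemma critDet_le_abs_det (hM : M.det ≠ 0) (hadm : latticeOf M ∩ B = {0}) :
    critDet B ≤ |M.det| :=
  csInf_le ⟨0, by rintro _ ⟨_, _, _, rfl⟩; exact abs_nonneg _⟩ ⟨M, hM, hadm, rfl⟩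

lemma IsCritical.eventually_one_le_det {α : Type*} {l : Filter α}
    {A : α → Matrix (Fin n) (Fin n) ℝ} (hM : IsCritical B M) (hbdd : Bornology.IsBounded B)
    (hA : Tendsto A l (𝓝 1)) (hpush : ∀ z ∈ latticeOf M ∩ frontier B, ∀ᶠ t in l, A t *ᵥ z ∉ B) :
    ∀ᶠ t in l, 1 ≤ (A t).det := by
  have hdet : Tendsto (fun t => (A t).det) l (𝓝 1) := by
    have hcont : Continuous fun C : Matrix (Fin n) (Fin n) ℝ => C.det := by fun_prop
    simpa [Function.comp_def] using (hcont.tendsto 1).comp hA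
  filter_upwards [hdet.eventually (lt_mem_nhds one_pos),
    eventually_latticeOf_mul_inter_eq hbdd hM.det_ne_zero hM.inter_eq hA hpush] with t hpos hadm
  have hle := critDet_le_abs_det (by simp [hpos.ne', hM.det_ne_zero]) hadm
  rwa [← hM.abs_det_eq, det_mul, abs_mul, abs_of_pos hpos,
    le_mul_iff_one_le_left (abs_pos.2 hM.det_ne_zero)] at hle

theorem IsCritical.choose_two_le_card (hM : IsCritical B M) (hopen : IsOpen B)
    (hbdd : Bornology.IsBounded B) (hconv : Convex ℝ B) (hsymm : ∀ x ∈ B, -x ∈ B)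
    (F : Finset (Fin n → ℝ)) (hF : ∀ z ∈ latticeOf M ∩ frontier B, z ∈ F ∨ -z ∈ F) :
    (n + 1).choose 2 ≤ F.card := by
  by_contra! hcard
  choose! f hf using fun (z : Fin n → ℝ) (hz : z ∉ B) =>
    geometric_hahn_banach_open_point hconv hopen hz
  let φ (z : F) : Matrix (Fin n) (Fin n) ℝ →ₗ[ℝ] ℝ :=
    (f z : (Fin n → ℝ) →ₗ[ℝ] ℝ) ∘ₗ (mulVecBilin ℝ ℝ).flip z
  obtain ⟨T, hT, hT0, hφ, htr⟩ : ∃ T : Matrix (Fin n) (Fin n) ℝ,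
      T.IsSymm ∧ T ≠ 0 ∧ (∀ z, φ z T = 0) ∧ T.trace ≤ 0 := by
    obtain ⟨T, hT, hT0, hφ⟩ := exists_isSymm_ne_zero_forall_eq_zero φ (by simpa)
    rcases le_total T.trace 0 with htr | htr
    · exact ⟨T, hT, hT0, hφ, htr⟩
    · exact ⟨-T, hT.neg, neg_ne_zero.2 hT0, fun z => by rw [map_neg, hφ, neg_zero], by simpa⟩
  have hfixed : ∀ z ∈ F, z ∉ B → ∀ t : ℝ, (1 + t • T) *ᵥ z ∉ B := by
    intro z hzF hz t ht
    have hlt := hf z hz _ ht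
    have hzero : f z (T *ᵥ z) = 0 := hφ ⟨z, hzF⟩
    simp [add_mulVec, smul_mulVec, hzero] at hlt
  have hpush : ∀ z ∈ latticeOf M ∩ frontier B, ∀ t : ℝ, (1 + t • T) *ᵥ z ∉ B := by
    intro z hz t ht
    have hzB : z ∉ B := hopen.interior_eq ▸ hz.2.2
    rcases hF z hz with hzF | hzF
    · exact hfixed z hzF hzB t ht
    · exact hfixed (-z) hzF (fun h => hzB (neg_neg z ▸ hsymm _ h)) t
        (mulVec_neg z _ ▸ hsymm _ ht)
  have hA : Tendsto (fun t : ℝ => 1 + t • T) (𝓝[>] 0) (𝓝 1) := by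
    have hcont : Continuous fun t : ℝ => 1 + t • T := by fun_prop
    simpa using (hcont.tendsto 0).mono_left nhdsWithin_le_nhds
  have hge := hM.eventually_one_le_det hbdd hA fun z hz => .of_forall (hpush z hz)
  obtain ⟨t, ht, ht'⟩ :=
    (hge.and (eventually_det_one_add_smul_lt_one (T := T) hT hT0 htr)).exists
  exact ht'.not_ge ht

end CriticalLattice

section UnimodularSystem

variable {V : Type*} [AddCommGroup V] {L : AddSubgroup V} {S : Set V} {x y z : V}

/-- A planar unimodular system: a symmetric set of nonzero vectors of a lattice `L` any two
independent members of which form a basis of `L`. -/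
structure IsUnimodularSystem (L : AddSubgroup V) (S : Set V) : Prop where
  subset : S ⊆ L
  zero_notMem : 0 ∉ S
  neg_mem : ∀ z ∈ S, -z ∈ S
  closure_pair : ∀ p ∈ S, ∀ q ∈ S, LinearIndependent ℤ ![p, q] → AddSubgroup.closure {p, q} = L

namespace IsUnimodularSystem

lemma abs_det_le_one (hS : IsUnimodularSystem L S) (hx : x ∈ S) (hy : y ∈ S)
    (hxy : LinearIndependent ℤ ![x, y]) {a b c d : ℤ} (hz : a • x + b • y ∈ S)
    (hw : c • x + d • y ∈ S) : |a * d - b * c| ≤ 1 := by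
  rcases eq_or_ne (a * d) (b * c) with h | h
  · simp [h]
  have hL := hS.closure_pair _ hz _ hw
    ((LinearIndependent.pair_add_smul_add_smul_iff a b c d).2 ⟨hxy, h⟩)
  obtain ⟨m, n, hmn⟩ := AddSubgroup.mem_closure_pair.1 (hL ▸ hS.subset hx)
  obtain ⟨k, l, hkl⟩ := AddSubgroup.mem_closure_pair.1 (hL ▸ hS.subset hy)
  have hx' : (m * a + n * c) • x + (m * b + n * d) • y = (1 : ℤ) • x + (0 : ℤ) • y := by
    linear_combination (norm := module) hmn
  have hy' : (k * a + l * c) • x + (k * b + l * d) • y = (0 : ℤ) • x + (1 : ℤ) • y := by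
    linear_combination (norm := module) hkl
  obtain ⟨h1, h2⟩ := hxy.eq_of_pair hx'
  have h3 := (hxy.eq_of_pair hy').2
  have hdet : (a * d - b * c) * (m * l - n * k) = 1 := by
    linear_combination (k * b + l * d) * h1 - (k * a + l * c) * h2 + h3
  exact (Int.isUnit_iff_abs_eq.1 (.of_mul_eq_one _ hdet)).le

lemma exists_eq_smul_add_smul (hS : IsUnimodularSystem L S) (hx : x ∈ S) (hy : y ∈ S)
    (hxy : LinearIndependent ℤ ![x, y]) (hz : z ∈ S) :
    ∃ a b : ℤ, z = a • x + b • y ∧ |a| ≤ 1 ∧ |b| ≤ 1 := by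
  obtain ⟨a, b, rfl⟩ := AddSubgroup.mem_closure_pair.1
    (hS.closure_pair x hx y hy hxy ▸ hS.subset hz)
  have ha := hS.abs_det_le_one hx hy hxy (a := 0) (b := 1) (by simpa using hy) hz
  have hb := hS.abs_det_le_one hx hy hxy (a := 1) (b := 0) (by simpa using hx) hz
  exact ⟨a, b, rfl, by simpa using ha, by simpa using hb⟩

lemma add_mem_or_sub_mem (hS : IsUnimodularSystem L S) (hx : x ∈ S) (hy : y ∈ S)
    (hxy : LinearIndependent ℤ ![x, y]) (hz : z ∈ S) (hzx : z ≠ x) (hzx' : z ≠ -x) (hzy : z ≠ y)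
    (hzy' : z ≠ -y) : x + y ∈ S ∨ x - y ∈ S := by
  obtain ⟨a, b, rfl, ha, hb⟩ := hS.exists_eq_smul_add_smul hx hy hxy hz
  have h0 : a • x + b • y ≠ 0 := fun h => hS.zero_notMem (h ▸ hz)
  have hz' := hS.neg_mem _ hz
  rw [Int.abs_le_one_iff] at ha hb
  rcases ha with rfl | rfl | rfl <;> rcases hb with rfl | rfl | rfl <;>
    simp_all [sub_eq_add_neg, add_comm]

lemma eq_hexagon_of_add_mem (hS : IsUnimodularSystem L S) (hx : x ∈ S) (hy : y ∈ S)
    (hxy : LinearIndependent ℤ ![x, y]) (hadd : x + y ∈ S) :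
    S = {x, -x, x + y, -(x + y), y, -y} := by
  refine Set.Subset.antisymm (fun z hz => ?_) ?_
  · obtain ⟨a, b, rfl, ha, hb⟩ := hS.exists_eq_smul_add_smul hx hy hxy hz
    have h0 : a • x + b • y ≠ 0 := fun h => hS.zero_notMem (h ▸ hz)
    have hab : |1 * b - 1 * a| ≤ 1 := hS.abs_det_le_one hx hy hxy (by simpa using hadd) hz
    rw [Int.abs_le_one_iff] at ha hb
    rcases ha with rfl | rfl | rfl <;> rcases hb with rfl | rfl | rfl <;>
      simp_all [add_comm]
  · rintro z (rfl | rfl | rfl | rfl | rfl | rfl)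
    exacts [hx, hS.neg_mem _ hx, hadd, hS.neg_mem _ hadd, hy, hS.neg_mem _ hy]

end IsUnimodularSystem

lemma ncard_hexagon (hxy : LinearIndependent ℤ ![x, y]) :
    ({x, -x, x + y, -(x + y), y, -y} : Set V).ncard = 6 := by
  let F : ℤ × ℤ → V := fun c => c.1 • x + c.2 • y
  have hF : Function.Injective F := fun c d h => Prod.ext_iff.2 (hxy.eq_of_pair h)
  have himage : ({x, -x, x + y, -(x + y), y, -y} : Set V) =
      F '' ({(1, 0), (-1, 0), (1, 1), (-1, -1), (0, 1), (0, -1)} : Finset (ℤ × ℤ)) := by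
    simp [Set.image_insert_eq, F, add_comm]
  rw [himage, Set.ncard_image_of_injective _ hF, Set.ncard_coe_finset]
  rfl

theorem IsUnimodularSystem.exists_hexagon (hS : IsUnimodularSystem L S) (hx : x ∈ S) (hy : y ∈ S)
    (hxy : LinearIndependent ℤ ![x, y]) (hz : z ∈ S) (hzx : z ≠ x) (hzx' : z ≠ -x) (hzy : z ≠ y)
    (hzy' : z ≠ -y) :
    ∃ p q r : V, p = q - r ∧ S = {p, -p, q, -q, r, -r} ∧
      ({p, -p, q, -q, r, -r} : Set V).ncard = 6 ∧ AddSubgroup.closure {p, q} = L ∧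
      AddSubgroup.closure {p, r} = L ∧ AddSubgroup.closure {q, r} = L := by
  wlog hadd : x + y ∈ S generalizing y
  · have hsub := (hS.add_mem_or_sub_mem hx hy hxy hz hzx hzx' hzy hzy').resolve_left hadd
    exact this (hS.neg_mem y hy) (LinearIndependent.pair_neg_right_iff.2 hxy) hzy' (by simpa)
      (by rwa [← sub_eq_add_neg])
  exact ⟨x, x + y, y, (add_sub_cancel_right x y).symm, hS.eq_hexagon_of_add_mem hx hy hxy hadd,
    ncard_hexagon hxy, hS.closure_pair _ hx _ hadd (by simpa [add_comm]),
    hS.closure_pair _ hx _ hy hxy, hS.closure_pair _ hadd _ hy (by simpa)⟩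

end UnimodularSystem

section AdmissibleLattice

lemma exists_smul_add_smul_eq {K V : Type*} [DivisionRing K] [AddCommGroup V] [Module K V]
    {p q : V} (hdim : Module.finrank K V = 2) (hpq : LinearIndependent K ![p, q]) (z : V) :
    ∃ a b : K, a • p + b • q = z := by
  have hspan := hpq.span_eq_top_of_card_eq_finrank (by simp [hdim])
  rw [range_cons_cons_empty] at hspan
  exact Submodule.mem_span_pair.1 (hspan ▸ Submodule.mem_top)

variable {V : Type*} [AddCommGroup V] [Module ℝ V] {N : Seminorm ℝ V} {L : AddSubgroup V} {p q : V}

/-- The vectors `p` and `q` are coordinate axes in which the seminorm `N` is the `ℓ¹` norm, so that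
in the plane the unit ball of `N` is the parallelogram with vertices `±p`, `±q`. -/
def IsL1Pair (N : Seminorm ℝ V) (p q : V) : Prop :=
  ∀ a b : ℝ, N (a • p + b • q) = |a| + |b|

lemma seminorm_smul_add_smul_le (hp : N p ≤ 1) (hq : N q ≤ 1) (a b : ℝ) :
    N (a • p + b • q) ≤ |a| + |b| :=
  calc N (a • p + b • q) ≤ |a| * N p + |b| * N q := by
        simpa only [map_smul_eq_mul, Real.norm_eq_abs] using map_add_le_add N (a • p) (b • q)
    _ ≤ |a| + |b| :=
        add_le_add (mul_le_of_le_one_right (abs_nonneg a) hp)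
          (mul_le_of_le_one_right (abs_nonneg b) hq)

lemma add_le_seminorm_of_two_le (hp : N p ≤ 1) (hq : N q ≤ 1) (hadd : 2 ≤ N (p + q)) {a b : ℝ}
    (ha : 0 ≤ a) (hb : 0 ≤ b) : a + b ≤ N (a • p + b • q) := by
  wlog hab : b ≤ a generalizing p q a b
  · rw [add_comm a, add_comm (a • p)]
    exact this hq hp (by rwa [add_comm]) hb ha (le_of_not_ge hab)
  have map_nonneg_smul {c : ℝ} (hc : 0 ≤ c) (z : V) : N (c • z) = c * N z := by
    rw [map_smul_eq_mul, Real.norm_of_nonneg hc]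
  have htriangle : a * N (p + q) ≤ N (a • p + b • q) + (a - b) * N q :=
    calc a * N (p + q) = N ((a • p + b • q) + (a - b) • q) := by
          rw [← map_nonneg_smul ha]
          congr 1
          module
      _ ≤ N (a • p + b • q) + N ((a - b) • q) := map_add_le_add N _ _
      _ = N (a • p + b • q) + (a - b) * N q := by rw [map_nonneg_smul (sub_nonneg.2 hab)]
  nlinarith

lemma isL1Pair_of_two_le (hp : N p ≤ 1) (hq : N q ≤ 1) (hadd : 2 ≤ N (p + q))
    (hsub : 2 ≤ N (p - q)) : IsL1Pair N p q := by
  intro a b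
  refine le_antisymm (seminorm_smul_add_smul_le hp hq a b) ?_
  wlog ha : 0 ≤ a generalizing a b
  · have hneg := this (-a) (-b) (by linarith)
    rwa [abs_neg, abs_neg, neg_smul, neg_smul, ← neg_add, map_neg_eq_map] at hneg
  rcases le_total 0 b with hb | hb
  · rw [abs_of_nonneg ha, abs_of_nonneg hb]
    exact add_le_seminorm_of_two_le hp hq hadd ha hb
  · rw [abs_of_nonneg ha, abs_of_nonpos hb, ← neg_smul_neg b q]
    exact add_le_seminorm_of_two_le hp (by rwa [map_neg_eq_map]) (by rwa [← sub_eq_add_neg]) ha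
      (neg_nonneg.2 hb)

lemma isL1Pair_of_midpoint_mem (hadm : ∀ z ∈ L, z ≠ 0 → 1 ≤ N z) (hpq : LinearIndependent ℝ ![p, q])
    (hq : q ∈ L) (hNp : N p ≤ 1) (hNq : N q ≤ 1) (hmid : (1 / 2 : ℝ) • (p + q) ∈ L) :
    IsL1Pair N p q := by
  have two_le {z : V} (hz : (1 / 2 : ℝ) • z ∈ L) (hz0 : z ≠ 0) : 2 ≤ N z := by
    have := hadm _ hz (by simpa)
    rw [map_smul_eq_mul, Real.norm_of_nonneg (by norm_num)] at this
    linarith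
  have hsub : (1 / 2 : ℝ) • (p - q) ∈ L := by
    convert! L.sub_mem hmid hq using 1
    module
  refine isL1Pair_of_two_le hNp hNq (two_le hmid fun h => ?_) (two_le hsub fun h => ?_)
  · simpa using hpq.eq_zero_of_pair (s := 1) (t := 1) (by simpa)
  · simpa using hpq.eq_zero_of_pair (s := 1) (t := -1) (by simpa [← sub_eq_add_neg])

lemma closure_pair_eq_of_not_isL1Pair (hdim : Module.finrank ℝ V = 2)
    (hadm : ∀ z ∈ L, z ≠ 0 → 1 ≤ N z) (hp : p ∈ L) (hq : q ∈ L) (hNp : N p ≤ 1) (hNq : N q ≤ 1)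
    (hpq : LinearIndependent ℝ ![p, q]) (hL1 : ¬ IsL1Pair N p q) :
    AddSubgroup.closure {p, q} = L := by
  refine le_antisymm ((AddSubgroup.closure_le L).2 (Set.pair_subset hp hq)) fun z hz => ?_
  obtain ⟨a, b, rfl⟩ := exists_smul_add_smul_eq hdim hpq z
  -- Rounding half-integers down places the remainders in `(-1/2, 1/2]`, so that the extreme case
  -- is the midpoint of `p` and `q`.
  set m := ⌈a - 1 / 2⌉
  set n := ⌈b - 1 / 2⌉
  have hm := Int.ceil_lt_add_one (a - 1 / 2)
  have hm' := Int.le_ceil (a - 1 / 2)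
  have hn := Int.ceil_lt_add_one (b - 1 / 2)
  have hn' := Int.le_ceil (b - 1 / 2)
  have hrem : (a - m) • p + (b - n) • q ∈ L := by
    convert! L.sub_mem hz (L.add_mem (L.zsmul_mem hp m) (L.zsmul_mem hq n)) using 1
    module
  by_cases hrem0 : (a - m) • p + (b - n) • q = 0
  · refine AddSubgroup.mem_closure_pair.2 ⟨m, n, ?_⟩
    linear_combination (norm := module) -hrem0
  · have hle := (hadm _ hrem hrem0).trans (seminorm_smul_add_smul_le hNp hNq _ _)
    have ha : a - m = 1 / 2 := by grind
    have hb : b - n = 1 / 2 := by grind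
    rw [ha, hb, ← smul_add] at hrem
    exact absurd (isL1Pair_of_midpoint_mem hadm hpq hq hNp hNq hrem) hL1

lemma linearIndependent_pair_of_seminorm_eq (hp : N p ≠ 0) (hpq : N p = N q) (hne : q ≠ p)
    (hne' : q ≠ -p) : LinearIndependent ℝ ![p, q] := by
  refine (LinearIndependent.pair_iff' fun h => hp (by simp [h])).2 ?_
  rintro c rfl
  rw [map_smul_eq_mul, eq_comm, mul_eq_right₀ hp, Real.norm_eq_abs, abs_eq zero_le_one] at hpq
  rcases hpq with rfl | rfl <;> simp_all

lemma isUnimodularSystem_of_not_isL1Pair (hdim : Module.finrank ℝ V = 2)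
    (hadm : ∀ z ∈ L, z ≠ 0 → 1 ≤ N z)
    (hL1 : ∀ p q, LinearIndependent ℝ ![p, q] → ¬ IsL1Pair N p q) :
    IsUnimodularSystem L (L ∩ {z | N z = 1}) where
  subset := Set.inter_subset_left
  zero_notMem h := zero_ne_one ((map_zero N).symm.trans h.2)
  neg_mem z hz := ⟨L.neg_mem hz.1, (map_neg_eq_map N z).trans hz.2⟩
  closure_pair := by
    rintro p ⟨hp, hNp⟩ q ⟨hq, hNq⟩ hpq
    have hne : q ≠ p := by
      rintro rfl
      simpa using hpq.eq_zero_of_pair (s := 1) (t := -1) (by simp)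
    have hne' : q ≠ -p := by
      rintro rfl
      simpa using hpq.eq_zero_of_pair (s := 1) (t := 1) (by simp)
    have hpq' := linearIndependent_pair_of_seminorm_eq (ne_of_eq_of_ne hNp one_ne_zero)
      (hNp.trans hNq.symm) hne hne'
    exact closure_pair_eq_of_not_isL1Pair hdim hadm hp hq hNp.le hNq.le hpq' (hL1 p q hpq')

end AdmissibleLattice

lemma exists_seminorm_lt_one_eq {V : Type*} [AddCommGroup V] [Module ℝ V] [TopologicalSpace V]
    [IsTopologicalAddGroup V] [ContinuousSMul ℝ V] {B : Set V} (hopen : IsOpen B)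
    (hconv : Convex ℝ B) (hsymm : ∀ x ∈ B, -x ∈ B) (h0 : 0 ∈ B) :
    ∃ N : Seminorm ℝ V, {z | N z < 1} = B ∧ {z | N z = 1} = frontier B := by
  have hnhds : B ∈ 𝓝 0 := hopen.mem_nhds h0
  refine ⟨gaugeSeminorm ((balanced_iff_neg_mem hconv).2 hsymm) hconv (absorbent_nhds_zero hnhds),
    Set.ext fun z => ?_, Set.ext fun z => gauge_eq_one_iff_mem_frontier hconv hnhds⟩
  exact (gauge_lt_one_iff_mem_interior hconv hnhds).trans (Set.ext_iff.1 hopen.interior_eq z)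

section PlanarLattice

variable {B : Set (Fin 2 → ℝ)} {M : Matrix (Fin 2) (Fin 2) ℝ} {p q : Fin 2 → ℝ}

lemma coe_closure_pair_eq_zspan (p q : Fin 2 → ℝ) :
    (AddSubgroup.closure {p, q} : Set (Fin 2 → ℝ)) = zspan p q := by
  ext z
  simp [AddSubgroup.mem_closure_pair, zspan, eq_comm]

lemma isParallelogram_of_isL1Pair {N : Seminorm ℝ (Fin 2 → ℝ)} (hpq : LinearIndependent ℝ ![p, q])
    (hN : IsL1Pair N p q) : IsParallelogram {z | N z < 1} := by
  set g : Matrix (Fin 2) (Fin 2) ℝ :=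
    (of ![(1 / 2 : ℝ) • p + (1 / 2 : ℝ) • q, (1 / 2 : ℝ) • p + (-1 / 2 : ℝ) • q])ᵀ with hg
  have hunit : IsUnit g := by
    rw [hg, isUnit_transpose, ← linearIndependent_rows_iff_isUnit]
    exact (LinearIndependent.pair_add_smul_add_smul_iff _ _ _ _).2 ⟨hpq, by norm_num⟩
  have hgN (y : Fin 2 → ℝ) : N (g *ᵥ y) = |(y 0 + y 1) / 2| + |(y 0 - y 1) / 2| := by
    rw [← hN]
    congr 1
    ext i
    simp only [hg, mulVec, dotProduct, Fin.sum_univ_two, transpose_apply, of_apply, cons_val_zero,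
      cons_val_one, Pi.add_apply, Pi.smul_apply, smul_eq_mul]
    ring
  have hcube : g.mulVec ⁻¹' {z | N z < 1} = {y | ∀ i, |y i| < 1} := by
    ext y
    simp only [Set.mem_preimage, Set.mem_ofPred_eq, hgN, Fin.forall_fin_two]
    grind
  refine ⟨g, ((isUnit_iff_isUnit_det g).1 hunit).ne_zero, ?_⟩
  rw [← hcube, Set.image_preimage_eq _ (mulVec_surjective_iff_isUnit.2 hunit)]

lemma IsCritical.exists_three_pairs (hM : IsCritical B M) (hopen : IsOpen B)
    (hbdd : Bornology.IsBounded B) (hconv : Convex ℝ B) (hsymm : ∀ x ∈ B, -x ∈ B) :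
    ∃ x ∈ latticeOf M ∩ frontier B, ∃ y ∈ latticeOf M ∩ frontier B,
      ∃ z ∈ latticeOf M ∩ frontier B,
        (y ≠ x ∧ y ≠ -x) ∧ (z ≠ x ∧ z ≠ -x) ∧ z ≠ y ∧ z ≠ -y := by
  have hnew (F : Finset (Fin 2 → ℝ)) (hF : F.card ≤ 2) :
      ∃ z ∈ latticeOf M ∩ frontier B, z ∉ F ∧ -z ∉ F := by
    by_contra! h
    have hcard : 3 ≤ F.card := hM.choose_two_le_card hopen hbdd hconv hsymm F fun z hz =>
      or_iff_not_imp_left.2 (h z hz)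
    omega
  obtain ⟨x, hx, -⟩ := hnew ∅ (by simp)
  obtain ⟨y, hy, hyx⟩ := hnew {x} (by simp)
  obtain ⟨z, hz, hzxy⟩ := hnew {x, y} Finset.card_le_two
  refine ⟨x, hx, y, hy, z, hz, ?_⟩
  simp only [Finset.mem_singleton, Finset.mem_insert, not_or, neg_eq_iff_eq_neg] at hyx hzxy
  tauto

end PlanarLattice

theorem stmt19 (B : Set (Fin 2 → ℝ)) (hopen : IsOpen B)
    (hbdd : Bornology.IsBounded B) (hconv : Convex ℝ B)
    (hsymm : ∀ x ∈ B, -x ∈ B) (h0 : (0 : Fin 2 → ℝ) ∈ B)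
    (hnpar : ¬ IsParallelogram B)
    (M : Matrix (Fin 2) (Fin 2) ℝ) (hM : M.det ≠ 0)
    (hadm : latticeOf M ∩ B = {0}) (hcrit : |M.det| = critDet B) :
    ∃ p q r : Fin 2 → ℝ, p = q - r ∧
      latticeOf M ∩ frontier B = ({p, -p, q, -q, r, -r} : Set (Fin 2 → ℝ)) ∧
      ({p, -p, q, -q, r, -r} : Set (Fin 2 → ℝ)).ncard = 6 ∧
      latticeOf M = zspan p q ∧ latticeOf M = zspan p r ∧ latticeOf M = zspan q r := by
  have hcritical : IsCritical B M := ⟨hM, hadm, hcrit⟩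
  obtain ⟨N, hball, hsphere⟩ := exists_seminorm_lt_one_eq hopen hconv hsymm h0
  have hmin : ∀ z ∈ latticeSubgroup M, z ≠ 0 → 1 ≤ N z := fun z hz hz0 =>
    not_lt.1 fun hlt => hz0 (hadm.subset ⟨hz, hball ▸ hlt⟩)
  have hS : IsUnimodularSystem (latticeSubgroup M) (latticeOf M ∩ frontier B) := by
    rw [← hsphere]
    exact isUnimodularSystem_of_not_isL1Pair (by simp) hmin fun p q hpq hN =>
      hnpar (hball ▸ isParallelogram_of_isL1Pair hpq hN)
  obtain ⟨x, hx, y, hy, z, hz, ⟨hyx, hyx'⟩, ⟨hzx, hzx'⟩, hzy, hzy'⟩ :=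
    hcritical.exists_three_pairs hopen hbdd hconv hsymm
  have hNx : N x = 1 := hsphere.superset hx.2
  have hNy : N y = 1 := hsphere.superset hy.2
  have hxy : LinearIndependent ℝ ![x, y] :=
    linearIndependent_pair_of_seminorm_eq (by simp [hNx]) (hNx.trans hNy.symm) hyx hyx'
  obtain ⟨p, q, r, hpqr, hfrontier, hcard, hpq, hpr, hqr⟩ :=
    hS.exists_hexagon hx hy (hxy.restrict_scalars' ℤ) hz hzx hzx' hzy hzy'
  simp only [← coe_closure_pair_eq_zspan]
  exact ⟨p, q, r, hpqr, hfrontier, hcard, congrArg SetLike.coe hpq.symm,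
    congrArg SetLike.coe hpr.symm, congrArg SetLike.coe hqr.symm⟩
end
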